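/- Let m ≥ 1 and let Ω be a nonempty open subset of the open half space {x ∈ ℝ^{m+1} : x_{m+1} > 0}. Let u be a bounded function, continuous on the closure of Ω in ℝ^{m+1} and harmonic on Ω. Then sup over the closure of Ω of u equals the supremum of u over the topological boundary ∂Ω of Ω in ℝ^{m+1}, and likewise the infimum of u over the closure of Ω equals the infimum of u over ∂Ω. (Ahlfors maximum principle on subdomains of the Dirichlet parabolic half space.) -/

import Mathlib

/-!
The half space carries a strictly superharmonic proper barrier. Writing `x = (y, t)`, put
`barrier x = ∑ j, log (yⱼ² + (t + 1)²) + log (t + 1)`. Each summand of the first kind is the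
harmonic function `log |z|²` of the plane in the variables `(yⱼ, t + 1)`, and `log (t + 1)` has
Laplacian `-(t + 1)⁻² < 0` (`barrier_superharmonic`). On `t ≥ 0` every term is nonnegative, and
for `m ≥ 1` the sum tends to infinity with `|x|` (`barrier_sublevel_bounded`).

If `u ≤ M` on the boundary and `u x₁ > M` somewhere, then for small `ε > 0` the function
`u - ε * barrier` still exceeds `M` at `x₁`, is at most `M` on the boundary, and tends to `-∞` at
infinity since `u` is bounded. Hence it attains its maximum over the closure at a point of `Ω`,
which the second derivative test along coordinate lines excludes, as its Laplacian there is
positive (`not_isLocalMax_sub_barrier`). The infimum is handled by passing to `-u`.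
-/

/-- The Euclidean Laplacian `Δu(x) = ∑ i, ∂²u/∂xᵢ²(x)`. -/
noncomputable def lap {n : ℕ} (u : EuclideanSpace ℝ (Fin n) → ℝ)
    (x : EuclideanSpace ℝ (Fin n)) : ℝ :=
  ∑ i : Fin n,
    fderiv ℝ (fun y => fderiv ℝ u y (EuclideanSpace.single i 1)) x (EuclideanSpace.single i 1)

/-- `u` is harmonic on `U`: it is `C²` there and its Laplacian vanishes identically on `U`. -/
def IsHarmonicOn {n : ℕ} (u : EuclideanSpace ℝ (Fin n) → ℝ)
    (U : Set (EuclideanSpace ℝ (Fin n))) : Prop :=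
  ContDiffOn ℝ 2 u U ∧ ∀ x ∈ U, lap u x = 0

open Set Filter Topology in
/-- Second derivative test: at a local maximum the second derivative is nonpositive. -/
lemma second_deriv_nonpos_of_isLocalMax {g g' : ℝ → ℝ} {c : ℝ}
    (hg : ∀ᶠ s in 𝓝 (0 : ℝ), HasDerivAt g (g' s) s) (hg' : HasDerivAt g' c 0)
    (hmax : IsLocalMax g 0) : c ≤ 0 := by
  by_contra! hc
  have hdg : deriv g =ᶠ[𝓝 0] g' := hg.mono fun s hs => hs.deriv
  have hdd : deriv (deriv g) 0 = c := by rw [hdg.deriv_eq]; exact hg'.deriv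
  have hmin : IsLocalMin g 0 :=
    isLocalMin_of_deriv_deriv_pos (by rw [hdd]; exact hc) hmax.deriv_eq_zero
      hg.self_of_nhds.continuousAt
  -- A point that is both a local maximum and a local minimum makes `g` locally constant.
  have hconst : g =ᶠ[𝓝 0] fun _ => g 0 := by
    filter_upwards [hmax, hmin] with s h1 h2 using le_antisymm h1 h2
  have h0 : deriv g =ᶠ[𝓝 0] fun _ => 0 := by
    have := hconst.deriv
    simpa using this
  have : deriv (deriv g) 0 = 0 := by rw [h0.deriv_eq]; simp
  linarith

/-- The barrier: with `x = (y, t)`, the function `∑ j, log (yⱼ² + (t + 1)²) + log (t + 1)`. -/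
noncomputable def barrier {m : ℕ} (x : EuclideanSpace ℝ (Fin (m + 1))) : ℝ :=
  ∑ j : Fin m, Real.log (x j.castSucc ^ 2 + (x (Fin.last m) + 1) ^ 2)
    + Real.log (x (Fin.last m) + 1)

lemma log_term_nonneg {a t : ℝ} (ht : 0 ≤ t) : 0 ≤ Real.log (a ^ 2 + (t + 1) ^ 2) :=
  Real.log_nonneg (by nlinarith [sq_nonneg a])

lemma barrier_nonneg {m : ℕ} {x : EuclideanSpace ℝ (Fin (m + 1))} (hx : 0 ≤ x (Fin.last m)) :
    0 ≤ barrier x :=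
  add_nonneg (Finset.sum_nonneg fun _ _ => log_term_nonneg hx)
    (Real.log_nonneg (by linarith))

lemma barrier_continuousOn {m : ℕ} :
    ContinuousOn (barrier (m := m)) {x | 0 ≤ x (Fin.last m)} := by
  unfold barrier
  refine ContinuousOn.add (continuousOn_finsetSum _ fun j _ => ContinuousOn.log (by fun_prop) ?_)
    (ContinuousOn.log (by fun_prop) ?_)
  · intro x hx
    have : 0 ≤ x (Fin.last m) := hx
    positivity
  · intro x hx
    have : 0 ≤ x (Fin.last m) := hx
    positivity

/-- Properness of the barrier; this needs `m ≥ 1`, so that some term controls `t`. -/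
lemma barrier_sublevel_bounded {m : ℕ} (hm : 1 ≤ m) (A : ℝ) :
    Bornology.IsBounded {x : EuclideanSpace ℝ (Fin (m + 1)) |
      0 ≤ x (Fin.last m) ∧ barrier x ≤ A} := by
  have key : ∀ x : EuclideanSpace ℝ (Fin (m + 1)), 0 ≤ x (Fin.last m) → barrier x ≤ A →
      ∀ i, x i ^ 2 ≤ Real.exp A := by
    intro x hx hA
    have h1 : ∀ j : Fin m, x j.castSucc ^ 2 + (x (Fin.last m) + 1) ^ 2 ≤ Real.exp A := by
      intro j
      rw [← Real.log_le_iff_le_exp (by positivity)]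
      have h2 := Finset.single_le_sum
        (f := fun j : Fin m => Real.log (x j.castSucc ^ 2 + (x (Fin.last m) + 1) ^ 2))
        (fun _ _ => log_term_nonneg hx) (Finset.mem_univ j)
      have h3 : 0 ≤ Real.log (x (Fin.last m) + 1) := Real.log_nonneg (by linarith)
      unfold barrier at hA
      simp only at h2
      linarith
    intro i
    induction i using Fin.lastCases with
    | last => nlinarith [h1 ⟨0, hm⟩, sq_nonneg (x (Fin.castSucc ⟨0, hm⟩))]
    | cast j => nlinarith [h1 j]
  refine (Metric.isBounded_closedBall (x := (0 : EuclideanSpace ℝ (Fin (m + 1))))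
    (r := Real.sqrt ((m + 1) * Real.exp A))).subset ?_
  rintro x ⟨hx, hA⟩
  rw [mem_closedBall_zero_iff]
  refine Real.le_sqrt_of_sq_le ?_
  rw [EuclideanSpace.real_norm_sq_eq]
  calc ∑ i, x i ^ 2 ≤ ∑ _i : Fin (m + 1), Real.exp A :=
        Finset.sum_le_sum fun i _ => key x hx hA i
    _ = (m + 1) * Real.exp A := by simp

/-- First derivative of `log (p² + b²)` in the variable `p`. -/
lemma hasDerivAt_log_sq_add (a b s : ℝ) (h : 0 < (a + s) ^ 2 + b ^ 2) :
    HasDerivAt (fun s => Real.log ((a + s) ^ 2 + b ^ 2))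
      (2 * (a + s) / ((a + s) ^ 2 + b ^ 2)) s := by
  have h1 : HasDerivAt (fun s => (a + s) ^ 2 + b ^ 2) (2 * (a + s)) s := by
    have := (((hasDerivAt_id s).const_add a).pow 2).add_const (b ^ 2)
    simpa using this
  exact h1.log h.ne'

/-- Second derivative of `log (p² + b²)` in the variable `p`; it is antisymmetric under exchange
of `p` and `b`, which is the harmonicity of the logarithm in the plane. -/
lemma hasDerivAt_log_sq_add' (a b : ℝ) (h : 0 < a ^ 2 + b ^ 2) :
    HasDerivAt (fun s => 2 * (a + s) / ((a + s) ^ 2 + b ^ 2))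
      (2 * (b ^ 2 - a ^ 2) / (a ^ 2 + b ^ 2) ^ 2) 0 := by
  have h1 : HasDerivAt (fun s => (a + s) ^ 2 + b ^ 2) (2 * (a + 0)) 0 := by
    have := (((hasDerivAt_id (0 : ℝ)).const_add a).pow 2).add_const (b ^ 2)
    simpa using this
  have h2 : HasDerivAt (fun s => 2 * (a + s)) 2 (0 : ℝ) := by
    simpa using ((hasDerivAt_id (0 : ℝ)).const_add a).const_mul 2
  refine (h2.fun_div h1 (by simpa using h.ne')).congr_deriv ?_
  rw [add_zero]
  congr 1
  ring

open Set Filter Topology in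
/-- The barrier is strictly superharmonic: along each coordinate line it is twice differentiable,
and its pure second derivatives `c i` have negative sum, equal to `-(t + 1)⁻²`. -/
lemma barrier_superharmonic {m : ℕ} (x : EuclideanSpace ℝ (Fin (m + 1)))
    (hx : 0 < x (Fin.last m)) :
    ∃ (g' : Fin (m + 1) → ℝ → ℝ) (c : Fin (m + 1) → ℝ),
      (∀ i, ∀ᶠ s in 𝓝 (0 : ℝ),
        HasDerivAt (fun s => barrier (x + s • EuclideanSpace.single i (1 : ℝ))) (g' i s) s) ∧
      (∀ i, HasDerivAt (g' i) (c i) 0) ∧ ∑ i, c i < 0 := by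
  set t := x (Fin.last m) with ht
  have hpos : ∀ j : Fin m, 0 < x j.castSucc ^ 2 + (t + 1) ^ 2 := fun j => by positivity
  refine ⟨Fin.lastCases
      (fun s => ∑ j : Fin m, 2 * (t + 1 + s) / ((t + 1 + s) ^ 2 + x j.castSucc ^ 2)
        + 1 / (t + 1 + s))
      (fun j s => 2 * (x j.castSucc + s) / ((x j.castSucc + s) ^ 2 + (t + 1) ^ 2)),
    Fin.lastCases
      (∑ j : Fin m, 2 * (x j.castSucc ^ 2 - (t + 1) ^ 2) / ((t + 1) ^ 2 + x j.castSucc ^ 2) ^ 2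
        + (-1 / (t + 1) ^ 2))
      (fun j => 2 * ((t + 1) ^ 2 - x j.castSucc ^ 2) / (x j.castSucc ^ 2 + (t + 1) ^ 2) ^ 2),
    ?_, ?_, ?_⟩
  · intro i
    induction i using Fin.lastCases with
    | last =>
      have hev : ∀ᶠ s in 𝓝 (0 : ℝ), -(t + 1) < s := eventually_gt_nhds (by linarith)
      filter_upwards [hev] with s hs
      have hs' : 0 < t + 1 + s := by linarith
      have heq : (fun s : ℝ => barrier (x + s • EuclideanSpace.single (Fin.last m) (1 : ℝ)))
          = fun s => ∑ j : Fin m, Real.log ((t + 1 + s) ^ 2 + x j.castSucc ^ 2)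
              + Real.log (t + 1 + s) := by
        funext s
        simp only [barrier, PiLp.add_apply, PiLp.smul_apply, PiLp.single_apply,
          Fin.castSucc_ne_last, if_false, if_true, smul_eq_mul, mul_one, mul_zero, add_zero, ← ht]
        congr 1
        · refine Finset.sum_congr rfl fun j _ => ?_
          congr 1
          ring
        · congr 1
          ring
      rw [heq]
      simp only [Fin.lastCases_last]
      refine HasDerivAt.add (HasDerivAt.fun_sum fun j _ => ?_) ?_
      · exact hasDerivAt_log_sq_add _ _ _ (by positivity)
      · exact ((hasDerivAt_id s).const_add (t + 1)).log hs'.ne'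
    | cast j =>
      refine Eventually.of_forall fun s => ?_
      have heq : (fun s : ℝ => barrier (x + s • EuclideanSpace.single j.castSucc (1 : ℝ)))
          = fun s => Real.log ((x j.castSucc + s) ^ 2 + (t + 1) ^ 2)
              + (∑ k ∈ Finset.univ.erase j, Real.log (x k.castSucc ^ 2 + (t + 1) ^ 2)
              + Real.log (t + 1)) := by
        funext s
        have hne : ¬ Fin.last m = j.castSucc := (Fin.castSucc_ne_last j).symm
        simp only [barrier, PiLp.add_apply, PiLp.smul_apply, PiLp.single_apply,
          smul_eq_mul, hne, if_false, mul_zero, add_zero, ← ht]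
        rw [← Finset.add_sum_erase _ _ (Finset.mem_univ j), add_assoc]
        congr 1
        · simp
        · congr 1
          refine Finset.sum_congr rfl fun k hk => ?_
          have hkj : ¬ k.castSucc = j.castSucc := fun h =>
            (Finset.mem_erase.1 hk).1 (Fin.castSucc_injective _ h)
          simp [hkj]
      rw [heq]
      simp only [Fin.lastCases_castSucc]
      exact (hasDerivAt_log_sq_add _ _ _ (by positivity)).add_const _
  · intro i
    induction i using Fin.lastCases with
    | last =>
      simp only [Fin.lastCases_last]
      refine HasDerivAt.add (HasDerivAt.fun_sum fun j _ => ?_) ?_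
      · exact hasDerivAt_log_sq_add' _ _ (by positivity)
      · have h1 : HasDerivAt (fun s : ℝ => t + 1 + s) 1 0 := by
          simpa using (hasDerivAt_id (0 : ℝ)).const_add (t + 1)
        have h2 := h1.fun_inv (by simp; linarith)
        simpa [one_div] using h2
    | cast j =>
      simp only [Fin.lastCases_castSucc]
      exact hasDerivAt_log_sq_add' _ _ (hpos j)
  · rw [Fin.sum_univ_castSucc]
    simp only [Fin.lastCases_last, Fin.lastCases_castSucc]
    rw [← add_assoc, ← Finset.sum_add_distrib]
    have h0 : ∀ j : Fin m,
        2 * ((t + 1) ^ 2 - x j.castSucc ^ 2) / (x j.castSucc ^ 2 + (t + 1) ^ 2) ^ 2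
        + 2 * (x j.castSucc ^ 2 - (t + 1) ^ 2) / ((t + 1) ^ 2 + x j.castSucc ^ 2) ^ 2 = 0 := by
      intro j
      rw [add_comm ((t + 1) ^ 2) (x j.castSucc ^ 2)]
      ring
    simp only [h0, Finset.sum_const_zero, zero_add]
    exact div_neg_of_neg_of_pos (by norm_num) (by positivity)

open Set Filter Topology in
/-- A function harmonic near `x` minus a positive multiple of the barrier has no local maximum
at `x`: its pure second derivatives would be nonpositive there, but their sum is positive. -/
lemma not_isLocalMax_sub_barrier {m : ℕ} {Ω : Set (EuclideanSpace ℝ (Fin (m + 1)))}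
    (hΩ : IsOpen Ω) {u : EuclideanSpace ℝ (Fin (m + 1)) → ℝ} (hu : IsHarmonicOn u Ω)
    {x : EuclideanSpace ℝ (Fin (m + 1))} (hxΩ : x ∈ Ω) (hx : 0 < x (Fin.last m))
    {ε : ℝ} (hε : 0 < ε) : ¬ IsLocalMax (fun y => u y - ε * barrier y) x := by
  intro hmax
  obtain ⟨g', c, hg, hg', hc⟩ := barrier_superharmonic x hx
  have hline : ∀ (i : Fin (m + 1)) (s : ℝ),
      HasDerivAt (fun s : ℝ => x + s • EuclideanSpace.single i (1 : ℝ))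
        (EuclideanSpace.single i (1 : ℝ)) s := by
    intro i s
    simpa using ((hasDerivAt_id s).smul_const (EuclideanSpace.single i (1 : ℝ))).const_add x
  have hcd : ContDiffAt ℝ 2 u x := hu.1.contDiffAt (hΩ.mem_nhds hxΩ)
  have hle : ∀ i, fderiv ℝ (fun y => fderiv ℝ u y (EuclideanSpace.single i 1)) x
      (EuclideanSpace.single i 1) - ε * c i ≤ 0 := by
    intro i
    have htend : Tendsto (fun s : ℝ => x + s • EuclideanSpace.single i (1 : ℝ)) (𝓝 0) (𝓝 x) := by
      have := (hline i 0).continuousAt.tendsto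
      simpa using this
    refine second_deriv_nonpos_of_isLocalMax
      (g := fun s => u (x + s • EuclideanSpace.single i (1 : ℝ))
        - ε * barrier (x + s • EuclideanSpace.single i (1 : ℝ)))
      (g' := fun s => fderiv ℝ u (x + s • EuclideanSpace.single i (1 : ℝ))
        (EuclideanSpace.single i 1) - ε * g' i s) ?_ ?_ ?_
    · filter_upwards [hg i, htend.eventually (hΩ.mem_nhds hxΩ)] with s h1 h2
      have hd : DifferentiableAt ℝ u (x + s • EuclideanSpace.single i (1 : ℝ)) :=
        (hu.1.contDiffAt (hΩ.mem_nhds h2)).differentiableAt (by norm_num)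
      exact (hd.hasFDerivAt.comp_hasDerivAt s (hline i s)).sub (h1.const_mul ε)
    · have hd : DifferentiableAt ℝ (fun y => fderiv ℝ u y (EuclideanSpace.single i 1)) x :=
        ((hcd.fderiv_right (m := 1) (by norm_num)).differentiableAt (by norm_num)).clm_apply
          (differentiableAt_const _)
      have hd' := hd.hasFDerivAt
      have h3 := HasFDerivAt.comp_hasDerivAt_of_eq (0 : ℝ) hd' (hline i 0) (by simp)
      exact h3.sub ((hg' i).const_mul ε)
    · have := htend.eventually hmax
      unfold IsLocalMax IsMaxFilter
      simpa using this
  have hsum := Finset.sum_nonpos fun i (_ : i ∈ Finset.univ) => hle i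
  rw [Finset.sum_sub_distrib, ← Finset.mul_sum] at hsum
  have h0 := hu.2 x hxΩ
  unfold lap at h0
  nlinarith

/-- The maximum principle in the form: an upper bound on the boundary is an upper bound on the
closure. -/
lemma le_of_le_on_frontier {m : ℕ} (hm : 1 ≤ m)
    {Ω : Set (EuclideanSpace ℝ (Fin (m + 1)))} (hΩopen : IsOpen Ω)
    (hΩsub : Ω ⊆ {x : EuclideanSpace ℝ (Fin (m + 1)) | 0 < x (Fin.last m)})
    {u : EuclideanSpace ℝ (Fin (m + 1)) → ℝ}
    (hbd : ∃ C : ℝ, ∀ x ∈ closure Ω, u x ≤ C)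
    (hcont : ContinuousOn u (closure Ω)) (hharm : IsHarmonicOn u Ω) {M : ℝ}
    (hM : ∀ x ∈ frontier Ω, u x ≤ M) : ∀ x ∈ closure Ω, u x ≤ M := by
  intro x₁ hx₁
  by_contra! hlt
  obtain ⟨C, hC⟩ := hbd
  have hcl : ∀ x ∈ closure Ω, 0 ≤ x (Fin.last m) := by
    have hclosed : IsClosed {x : EuclideanSpace ℝ (Fin (m + 1)) | 0 ≤ x (Fin.last m)} :=
      isClosed_le continuous_const (by fun_prop)
    exact closure_minimal (fun x hx => le_of_lt (show 0 < x (Fin.last m) from hΩsub hx)) hclosed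
  have hb₁ : 0 ≤ barrier x₁ := barrier_nonneg (hcl x₁ hx₁)
  -- `ε` is small enough that the penalised function still exceeds `M` at `x₁`.
  obtain ⟨ε, hε, hεx⟩ : ∃ ε : ℝ, 0 < ε ∧ M < u x₁ - ε * barrier x₁ := by
    refine ⟨(u x₁ - M) / (barrier x₁ + 1), div_pos (by linarith) (by linarith), ?_⟩
    have h1 : (u x₁ - M) / (barrier x₁ + 1) * (barrier x₁ + 1) = u x₁ - M :=
      div_mul_cancel₀ _ (by linarith)
    have h2 : 0 < (u x₁ - M) / (barrier x₁ + 1) := div_pos (by linarith) (by linarith)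
    linarith
  set v : EuclideanSpace ℝ (Fin (m + 1)) → ℝ := fun y => u y - ε * barrier y with hv
  have hvcont : ContinuousOn v (closure Ω) :=
    hcont.sub ((barrier_continuousOn.mono hcl).const_mul ε)
  set K := closure Ω ∩ v ⁻¹' Set.Ici (v x₁) with hK
  have hKclosed : IsClosed K := hvcont.preimage_isClosed_of_isClosed isClosed_closure isClosed_Ici
  have hKbdd : Bornology.IsBounded K := by
    refine (barrier_sublevel_bounded hm ((C - v x₁) / ε)).subset ?_
    rintro x ⟨hx, hvx⟩
    refine ⟨hcl x hx, ?_⟩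
    rw [le_div_iff₀ hε]
    have h1 : v x₁ ≤ u x - ε * barrier x := hvx
    linarith [hC x hx]
  have hKcpt : IsCompact K := Metric.isCompact_of_isClosed_isBounded hKclosed hKbdd
  obtain ⟨x₀, hx₀K, hx₀⟩ := hKcpt.exists_isMaxOn ⟨x₁, hx₁, le_refl (v x₁)⟩
    (hvcont.mono Set.inter_subset_left)
  have hx₁₀ : v x₁ ≤ v x₀ := hx₀K.2
  have hmax : ∀ y ∈ closure Ω, v y ≤ v x₀ := by
    intro y hy
    by_cases h : v x₁ ≤ v y
    · exact hx₀ ⟨hy, h⟩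
    · linarith
  have hx₀Ω : x₀ ∈ Ω := by
    by_contra hnot
    have hfr : x₀ ∈ frontier Ω := by
      rw [hΩopen.frontier_eq]
      exact ⟨hx₀K.1, hnot⟩
    have h1 : v x₀ ≤ u x₀ := by
      have := mul_nonneg hε.le (barrier_nonneg (hcl x₀ hx₀K.1))
      simp only [hv]
      linarith
    have h2 : M < v x₁ := hεx
    linarith [hM x₀ hfr]
  refine not_isLocalMax_sub_barrier hΩopen hharm hx₀Ω (hΩsub hx₀Ω) hε ?_
  filter_upwards [hΩopen.mem_nhds hx₀Ω] with y hy using hmax y (subset_closure hy)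

lemma IsHarmonicOn.neg {n : ℕ} {u : EuclideanSpace ℝ (Fin n) → ℝ}
    {U : Set (EuclideanSpace ℝ (Fin n))} (h : IsHarmonicOn u U) :
    IsHarmonicOn (fun x => -u x) U := by
  refine ⟨h.1.neg, fun x hx => ?_⟩
  have h0 := h.2 x hx
  unfold lap at h0 ⊢
  simp only [fderiv_fun_neg, neg_apply, Finset.sum_neg_distrib, h0, neg_zero]

/-- Ahlfors maximum principle on subdomains of the Dirichlet parabolic half space: if `Ω` is a
nonempty open subset of the open upper half space of `ℝ^{m+1}` and `u` is bounded, continuous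
on the closure of `Ω` and harmonic on `Ω`, then the supremum (resp. infimum) of `u` over the
closure of `Ω` equals its supremum (resp. infimum) over the topological boundary of `Ω`. -/
theorem ahlfors_max_principle_subdomain (m : ℕ) (hm : 1 ≤ m)
    (Ω : Set (EuclideanSpace ℝ (Fin (m + 1))))
    (hΩne : Ω.Nonempty) (hΩopen : IsOpen Ω)
    (hΩsub : Ω ⊆ {x : EuclideanSpace ℝ (Fin (m + 1)) | 0 < x (Fin.last m)})
    (u : EuclideanSpace ℝ (Fin (m + 1)) → ℝ)
    (hbd : ∃ C : ℝ, ∀ x ∈ closure Ω, |u x| ≤ C)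
    (hcont : ContinuousOn u (closure Ω))
    (hharm : IsHarmonicOn u Ω) :
    sSup (u '' closure Ω) = sSup (u '' frontier Ω) ∧
      sInf (u '' closure Ω) = sInf (u '' frontier Ω) := by
  obtain ⟨C, hC⟩ := hbd
  have hsub : frontier Ω ⊆ closure Ω := frontier_subset_closure
  have hfne : (frontier Ω).Nonempty := by
    rw [Set.nonempty_iff_ne_empty, Ne, ← isClopen_iff_frontier_eq_empty, isClopen_iff]
    rintro (h | h)
    · exact hΩne.ne_empty h
    · have h0 : (0 : EuclideanSpace ℝ (Fin (m + 1))) ∈ Ω := h ▸ Set.mem_univ _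
      simpa using hΩsub h0
  have hba : BddAbove (u '' closure Ω) :=
    ⟨C, by rintro _ ⟨x, hx, rfl⟩; exact (abs_le.1 (hC x hx)).2⟩
  have hbb : BddBelow (u '' closure Ω) :=
    ⟨-C, by rintro _ ⟨x, hx, rfl⟩; exact (abs_le.1 (hC x hx)).1⟩
  have himg : u '' frontier Ω ⊆ u '' closure Ω := Set.image_mono hsub
  constructor
  · refine le_antisymm (csSup_le (hΩne.closure.image u) ?_)
      (csSup_le_csSup hba (hfne.image u) himg)
    rintro _ ⟨x, hx, rfl⟩
    exact le_of_le_on_frontier hm hΩopen hΩsub ⟨C, fun x hx => (abs_le.1 (hC x hx)).2⟩ hcont hharm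
      (fun y hy => le_csSup (hba.mono himg) ⟨y, hy, rfl⟩) x hx
  · refine le_antisymm (csInf_le_csInf hbb (hfne.image u) himg)
      (le_csInf (hΩne.closure.image u) ?_)
    rintro _ ⟨x, hx, rfl⟩
    have h := le_of_le_on_frontier hm hΩopen hΩsub (u := fun x => -u x)
      ⟨C, fun x hx => by linarith [(abs_le.1 (hC x hx)).1]⟩ hcont.neg hharm.neg
      (M := -sInf (u '' frontier Ω))
      (fun y hy => neg_le_neg (csInf_le (hbb.mono himg) ⟨y, hy, rfl⟩)) x hx
    linarith
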